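/- Suppose Q is a transition kernel on ℤ^d with invariant measure π satisfying c ≤ π(x) ≤ C for all x (0 < c ≤ C < ∞), Q is strongly irreducible with constants (ε,N), and Q has range bounded by B. Then there exist an integer m ≥ 1 and a constant κ > 0, depending only on d, c, C, ε, N and B, such that the transition kernel (Q^m)*Q^m satisfies the d-dimensional Nash inequality: for every f ∈ ℓ₀(ℤ^d), 𝓔_{(Q^m)*Q^m}(f,f) ≥ κ ‖f‖_{L²(π)}^{2+4/d} ‖f‖_{L¹(π)}^{−4/d}. -/

import Mathlib

open scoped Classical

noncomputable section

/-- Points of `ℤ^d`. -/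
abbrev Zd (d : ℕ) := Fin d → ℤ

/-- Euclidean norm on `ℤ^d`. -/
def eucNorm {d : ℕ} (v : Zd d) : ℝ := Real.sqrt (∑ i, ((v i : ℝ)) ^ 2)

/-- `n`-fold composition of a transition kernel. -/
def kerpow {d : ℕ} (Q : Zd d → Zd d → ℝ) : ℕ → Zd d → Zd d → ℝ
  | 0 => fun x y => if x = y then 1 else 0
  | m + 1 => fun x y => ∑' zz : Zd d, kerpow Q m x zz * Q zz y

/-- Adjoint of a kernel with respect to the measure `π`. -/
def adjK {d : ℕ} (π : Zd d → ℝ) (Q : Zd d → Zd d → ℝ) (x y : Zd d) : ℝ :=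
  π y * Q y x / π x

/-- Composition of two kernels. -/
def compK {d : ℕ} (Q₁ Q₂ : Zd d → Zd d → ℝ) (x y : Zd d) : ℝ :=
  ∑' zz : Zd d, Q₁ x zz * Q₂ zz y

/-- Dirichlet form of the kernel `Q` with respect to `π`. -/
def dirichlet {d : ℕ} (π : Zd d → ℝ) (Q : Zd d → Zd d → ℝ) (f : Zd d → ℝ) : ℝ :=
  (1 / 2) * ∑' p : Zd d × Zd d, (f p.2 - f p.1) ^ 2 * π p.1 * Q p.1 p.2

/-- `L²(π)`-norm. -/
def l2norm {d : ℕ} (π : Zd d → ℝ) (f : Zd d → ℝ) : ℝ := Real.sqrt (∑' x, (f x) ^ 2 * π x)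

/-- `L¹(π)`-norm. -/
def l1norm {d : ℕ} (π : Zd d → ℝ) (f : Zd d → ℝ) : ℝ := ∑' x, |f x| * π x

/-!
A power `Q ^ m` may still be periodic, so its symmetrisation need not connect neighbouring points
of `ℤ^d` and its Dirichlet form cannot simply be compared with that of the nearest-neighbour walk.
Strong irreducibility and bounded range however provide `m`, `K` and `δ > 0` such that `Q ^ m`
stays put with probability at least `δ`, and such that, from any point within distance `K + 1` of a
target, it jumps to within distance `K` of that target with probability at least `δ`. Moves of
`(Q ^ m)* Q ^ m` that have probability at least `δ ^ 2` therefore follow every lattice path up to an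
error `K` that does not accumulate.

Given `f` and a scale `r`, let such moves follow the paths from `x` to `x + u`, for `u` in a cube of
side `r`. Since each trajectory shadows a translate, at most a bounded number of them occupy the
same point at the same time, so that Cauchy–Schwarz along the paths and averaging over `u` give
`‖f‖₂² ≲ r ^ 2 𝓔(f, f) + ‖f‖₁² / r ^ d`. Optimising over `r` yields Nash's inequality.
-/

open Finset Metric

section LatticeBalls

variable {d : ℕ}

lemma norm_le_eucNorm (v : Zd d) : ‖v‖ ≤ eucNorm v := by
  refine (pi_norm_le_iff_of_nonneg (Real.sqrt_nonneg _)).2 fun i => ?_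
  rw [Int.norm_eq_abs, ← Real.sqrt_sq_eq_abs]
  exact Real.sqrt_le_sqrt
    (single_le_sum (f := fun j => (v j : ℝ) ^ 2) (fun _ _ => sq_nonneg _) (mem_univ i))

lemma eucNorm_single (i : Fin d) (a : ℤ) : eucNorm (Pi.single i a : Zd d) = |(a : ℝ)| := by
  rw [eucNorm, ← Real.sqrt_sq_eq_abs, sum_eq_single i] <;> simp +contextual

lemma finite_closedBall (x : Zd d) (r : ℝ) : (closedBall x r).Finite :=
  (isCompact_closedBall x r).finite_of_discrete

/-- The number of points of `ℤ^d` in a closed ball of radius `r` for the supremum metric. -/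
def ballCard (d : ℕ) (r : ℝ) : ℕ := (closedBall (0 : Zd d) r).ncard

lemma ncard_closedBall (x : Zd d) (r : ℝ) : (closedBall x r).ncard = ballCard d r := by
  rw [← vadd_closedBall_zero, ballCard]
  exact Set.ncard_image_of_injective _ (add_right_injective x)

lemma ballCard_pos {r : ℝ} (hr : 0 ≤ r) : 0 < ballCard d r :=
  (Set.ncard_pos (finite_closedBall 0 r)).2 ⟨0, mem_closedBall_self hr⟩

lemma card_le_ballCard {ι : Type*} {s : Finset ι} {g : ι → Zd d} (hg : g.Injective) {z : Zd d}
    {r : ℝ} (h : ∀ a ∈ s, dist (g a) z ≤ r) : #s ≤ ballCard d r := by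
  rw [← ncard_closedBall z, ← card_image_of_injective s hg, ← Set.ncard_coe_finset]
  refine Set.ncard_le_ncard ?_ (finite_closedBall z r)
  simpa [Set.subset_def] using h

end LatticeBalls

section Kernels

variable {d : ℕ} {Q Q₁ Q₂ : Zd d → Zd d → ℝ} {π : Zd d → ℝ} {b b₁ b₂ : ℝ}

/-- The kernel `Q` only makes moves of length at most `b` for the supremum metric. -/
def HasRange (Q : Zd d → Zd d → ℝ) (b : ℝ) : Prop := ∀ ⦃x y⦄, Q x y ≠ 0 → dist x y ≤ b

lemma hasRange_of_eucNorm (h : ∀ x y, b < eucNorm (y - x) → Q x y = 0) : HasRange Q b := by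
  intro x y hxy
  rw [dist_comm, dist_eq_norm]
  exact (norm_le_eucNorm _).trans (not_lt.1 (mt (h x y) hxy))

lemma HasRange.comp (h₁ : HasRange Q₁ b₁) (h₂ : HasRange Q₂ b₂) :
    HasRange (compK Q₁ Q₂) (b₁ + b₂) := by
  intro x y hxy
  obtain ⟨z, hz⟩ : ∃ z, Q₁ x z * Q₂ z y ≠ 0 := by
    by_contra! h
    exact hxy (by simp [compK, h])
  exact (dist_triangle x z y).trans
    (add_le_add (h₁ (left_ne_zero_of_mul hz)) (h₂ (right_ne_zero_of_mul hz)))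

lemma HasRange.adjoint (h : HasRange Q b) : HasRange (adjK π Q) b := by
  intro x y hxy
  rw [dist_comm]
  exact h fun h0 => hxy (by simp [adjK, h0])

lemma HasRange.pow (h : HasRange Q b) (n : ℕ) : HasRange (kerpow Q n) (n * b) := by
  induction n with
  | zero => intro x y hxy; simp_all [kerpow]
  | succ n ih =>
    rw [Nat.cast_succ, add_one_mul]
    exact ih.comp h

lemma HasRange.summable_compK (h : HasRange Q₂ b) (x y : Zd d) :
    Summable fun z => Q₁ x z * Q₂ z y :=
  summable_of_hasFiniteSupport <|
    (finite_closedBall y b).subset fun _ hz => h (right_ne_zero_of_mul hz)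

lemma compK_nonneg (h₁ : ∀ x y, 0 ≤ Q₁ x y) (h₂ : ∀ x y, 0 ≤ Q₂ x y) (x y : Zd d) :
    0 ≤ compK Q₁ Q₂ x y :=
  tsum_nonneg fun z => mul_nonneg (h₁ x z) (h₂ z y)

lemma mul_le_compK (h₁ : ∀ x y, 0 ≤ Q₁ x y) (h₂ : ∀ x y, 0 ≤ Q₂ x y) (hb : HasRange Q₂ b)
    (x y z : Zd d) : Q₁ x y * Q₂ y z ≤ compK Q₁ Q₂ x z :=
  (hb.summable_compK x z).le_tsum y fun w _ => mul_nonneg (h₁ x w) (h₂ w z)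

lemma kerpow_nonneg (h : ∀ x y, 0 ≤ Q x y) (n : ℕ) (x y : Zd d) : 0 ≤ kerpow Q n x y := by
  induction n generalizing x y with
  | zero => simp only [kerpow]; split_ifs <;> norm_num
  | succ n ih => exact compK_nonneg ih h x y

lemma kerpow_one (x y : Zd d) : kerpow Q 1 x y = Q x y := by
  simp only [kerpow, ite_mul, one_mul, zero_mul, tsum_ite_eq']

lemma mul_le_kerpow_add (h : ∀ x y, 0 ≤ Q x y) (hb : HasRange Q b) (n k : ℕ) (x y z : Zd d) :
    kerpow Q n x y * kerpow Q k y z ≤ kerpow Q (n + k) x z := by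
  induction k generalizing z with
  | zero =>
    by_cases hyz : y = z
    · simp [kerpow, hyz]
    · simpa [kerpow, hyz] using kerpow_nonneg h n x z
  | succ k ih =>
    calc kerpow Q n x y * ∑' w, kerpow Q k y w * Q w z
        = ∑' w, kerpow Q n x y * kerpow Q k y w * Q w z := by
          simp only [← tsum_mul_left, mul_assoc]
      _ ≤ ∑' w, kerpow Q (n + k) x w * Q w z :=
          Summable.tsum_le_tsum (fun w => mul_le_mul_of_nonneg_right (ih w) (h w z))
            (hb.summable_compK (Q₁ := fun _ w => kerpow Q n x y * kerpow Q k y w) x z)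
            (hb.summable_compK x z)

lemma adjK_nonneg (hπ : ∀ x, 0 ≤ π x) (h : ∀ x y, 0 ≤ Q x y) (x y : Zd d) : 0 ≤ adjK π Q x y :=
  div_nonneg (mul_nonneg (hπ y) (h y x)) (hπ x)

lemma mul_le_compK_adjK (hπ : ∀ x, 0 < π x) (h : ∀ x y, 0 ≤ Q x y) (hb : HasRange Q b)
    (x y : Zd d) : Q x x * Q x y ≤ compK (adjK π Q) Q x y := by
  have hadj : adjK π Q x x = Q x x := mul_div_cancel_left₀ _ (hπ x).ne'
  simpa only [hadj] using mul_le_compK (adjK_nonneg (fun x => (hπ x).le) h) h hb x x y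

end Kernels

section Travel

variable {d : ℕ} {Q : Zd d → Zd d → ℝ} {b η : ℝ}

/-- `Q` is strongly irreducible with constants `(ε, N)`. -/
def StronglyIrreducible (Q : Zd d → Zd d → ℝ) (ε : ℝ) (N : ℕ) : Prop :=
  ∀ x e, eucNorm e = 1 → ∃ n ≤ N, ε ≤ kerpow Q n x (x + e)

/-- `Q` goes from `x` to `y` in `n` steps with probability at least `η ^ n`. The lower bound is
geometric so that travels can be concatenated. -/
def Travels (Q : Zd d → Zd d → ℝ) (η : ℝ) (n : ℕ) (x y : Zd d) : Prop :=
  η ^ n ≤ kerpow Q n x y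

lemma Travels.refl (Q : Zd d → Zd d → ℝ) (η : ℝ) (x : Zd d) : Travels Q η 0 x x := by
  simp [Travels, kerpow]

lemma Travels.trans (h0 : ∀ x y, 0 ≤ Q x y) (hb : HasRange Q b) (hη : 0 < η) {n k : ℕ}
    {x y z : Zd d} (h : Travels Q η n x y) (h' : Travels Q η k y z) : Travels Q η (n + k) x z :=
  calc η ^ (n + k) = η ^ n * η ^ k := pow_add η n k
    _ ≤ kerpow Q n x y * kerpow Q k y z :=
        mul_le_mul h h' (pow_pos hη k).le (kerpow_nonneg h0 n x y)
    _ ≤ kerpow Q (n + k) x z := mul_le_kerpow_add h0 hb n k x y z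

lemma Travels.mul (h0 : ∀ x y, 0 ≤ Q x y) (hb : HasRange Q b) (hη : 0 < η) {n : ℕ} {x : Zd d}
    (h : Travels Q η n x x) (k : ℕ) : Travels Q η (n * k) x x := by
  induction k with
  | zero => exact Travels.refl Q η x
  | succ k ih => exact ih.trans h0 hb hη h

lemma Travels.dist_le (hb : HasRange Q b) (hη : 0 < η) {n : ℕ} {x y : Zd d}
    (h : Travels Q η n x y) : dist x y ≤ n * b :=
  hb.pow n ((pow_pos hη n).trans_le h).ne'

lemma exists_le_of_hasSum_one (hb : HasRange Q b) (h1 : ∀ x, HasSum (Q x) 1)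
    (hηb : η * ballCard d b ≤ 1) (x : Zd d) : ∃ y, η ≤ Q x y := by
  set ball := (finite_closedBall x b).toFinset
  have hball : ∀ y, Q x y ≠ 0 → y ∈ ball := fun y hy => by simpa [ball, dist_comm] using hb hy
  have hsum : ∑ y ∈ ball, Q x y = 1 := by
    rw [← (h1 x).tsum_eq, tsum_eq_sum fun y hy => not_not.1 (mt (hball y) hy)]
  have hcard : #ball = ballCard d b := by
    rw [← ncard_closedBall x, Set.ncard_eq_toFinset_card _ (finite_closedBall x b)]
  have hne : ball.Nonempty := nonempty_of_sum_ne_zero (hsum ▸ one_ne_zero)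
  obtain ⟨y, -, hy⟩ : ∃ y ∈ ball, η ≤ Q x y := exists_le_of_sum_le hne <| by
    rwa [sum_const, hcard, nsmul_eq_mul, mul_comm, hsum]
  exact ⟨y, hy⟩

lemma exists_travels (h0 : ∀ x y, 0 ≤ Q x y) (hb : HasRange Q b) (h1 : ∀ x, HasSum (Q x) 1)
    (hη : 0 < η) (hηb : η * ballCard d b ≤ 1) (n : ℕ) (x : Zd d) : ∃ y, Travels Q η n x y := by
  induction n with
  | zero => exact ⟨x, Travels.refl Q η x⟩
  | succ n ih =>
    obtain ⟨y, hxy⟩ := ih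
    obtain ⟨z, hyz⟩ := exists_le_of_hasSum_one hb h1 hηb y
    exact ⟨z, hxy.trans h0 hb hη (by rwa [Travels, kerpow_one, pow_one])⟩

lemma StronglyIrreducible.exists_travels {ε : ℝ} {N : ℕ} (h : StronglyIrreducible Q ε N)
    (hε : 0 < ε) (hη : 0 < η) (hη1 : η ≤ 1) (hηε : η ≤ ε) (x e : Zd d) (he : eucNorm e = 1) :
    ∃ n ≤ N, 0 < n ∧ Travels Q η n x (x + e) := by
  obtain ⟨n, hn, hxe⟩ := h x e he
  have hn0 : n ≠ 0 := by
    rintro rfl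
    have he0 : e ≠ 0 := by
      rintro rfl
      simp [eucNorm] at he
    have hzero : kerpow Q 0 x (x + e) = 0 := by simp [kerpow, he0]
    linarith
  exact ⟨n, hn, Nat.pos_of_ne_zero hn0, (pow_le_of_le_one hη.le hη1 hn0).trans (hηε.trans hxe)⟩

variable {N : ℕ}

lemma exists_unit_step_toward {x y : Zd d} (hxy : x ≠ y) : ∃ e : Zd d, eucNorm e = 1 ∧
    ∑ i, (y i - (x + e) i).natAbs + 1 = ∑ i, (y i - x i).natAbs := by
  obtain ⟨i, hi⟩ := Function.ne_iff.1 hxy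
  obtain ⟨a, ha, hia⟩ :
      ∃ a : ℤ, |a| = 1 ∧ (y i - (x i + a)).natAbs + 1 = (y i - x i).natAbs := by
    rcases lt_or_gt_of_ne hi with hlt | hgt
    · exact ⟨1, by norm_num, by lia⟩
    · exact ⟨-1, by norm_num, by lia⟩
  refine ⟨Pi.single i a, by rw [eucNorm_single]; exact_mod_cast ha, ?_⟩
  have hrest : ∑ j ∈ univ.erase i, (y j - (x + (Pi.single i a : Zd d)) j).natAbs
      = ∑ j ∈ univ.erase i, (y j - x j).natAbs :=
    sum_congr rfl fun j hj => by simp [ne_of_mem_erase hj]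
  rw [← add_sum_erase _ _ (mem_univ i), ← add_sum_erase _ _ (mem_univ i), hrest, Pi.add_apply,
    Pi.single_eq_same, ← hia]
  ring

lemma exists_travels_of_sum_natAbs_eq (h0 : ∀ x y, 0 ≤ Q x y) (hb : HasRange Q b) (hη : 0 < η)
    (hN : ∀ x e, eucNorm e = 1 → ∃ n ≤ N, Travels Q η n x (x + e)) {l : ℕ} {x y : Zd d}
    (hl : ∑ i, (y i - x i).natAbs = l) : ∃ n ≤ N * l, Travels Q η n x y := by
  induction l generalizing x with
  | zero =>
    have hxy : x = y := funext fun i => by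
      have := sum_eq_zero_iff.1 hl i (mem_univ i)
      lia
    exact ⟨0, le_rfl, hxy ▸ Travels.refl Q η x⟩
  | succ l ih =>
    have hxy : x ≠ y := by
      rintro rfl
      simp at hl
    obtain ⟨e, he, hdecr⟩ := exists_unit_step_toward hxy
    obtain ⟨n, hn, hxe⟩ := hN x e he
    obtain ⟨k, hk, hey⟩ := ih (x := x + e) (by lia)
    exact ⟨n + k, by rw [Nat.mul_succ]; lia, hxe.trans h0 hb hη hey⟩

lemma exists_travels_of_dist_le (h0 : ∀ x y, 0 ≤ Q x y) (hb : HasRange Q b) (hη : 0 < η)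
    (hN : ∀ x e, eucNorm e = 1 → ∃ n ≤ N, Travels Q η n x (x + e)) {r : ℝ} {x y : Zd d}
    (hxy : dist x y ≤ r) : ∃ n ≤ N * (d * ⌊r⌋₊), Travels Q η n x y := by
  have hcoord : ∀ i, (y i - x i).natAbs ≤ ⌊r⌋₊ := fun i => by
    refine Nat.le_floor ?_
    rw [Nat.cast_natAbs, Int.cast_abs, ← Int.norm_eq_abs, ← dist_eq_norm, dist_comm]
    exact (dist_le_pi_dist x y i).trans hxy
  have hsum : ∑ i, (y i - x i).natAbs ≤ d * ⌊r⌋₊ := by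
    simpa using sum_le_card_nsmul univ _ _ fun i _ => hcoord i
  obtain ⟨n, hn, h⟩ := exists_travels_of_sum_natAbs_eq h0 hb hη hN rfl
  exact ⟨n, hn.trans (Nat.mul_le_mul_left N hsum), h⟩

-- A step along `e` followed by a step along `-e` is a loop of length at most `2 * N`.
lemma travels_self_factorial (hd : 0 < d) (h0 : ∀ x y, 0 ≤ Q x y) (hb : HasRange Q b)
    (hη : 0 < η) (hN : ∀ x e, eucNorm e = 1 → ∃ n ≤ N, 0 < n ∧ Travels Q η n x (x + e))
    (x : Zd d) : Travels Q η (2 * N).factorial x x := by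
  set e : Zd d := Pi.single ⟨0, hd⟩ 1
  obtain ⟨n, hn, hn0, hout⟩ := hN x e (by simp [e, eucNorm_single])
  obtain ⟨k, hk, -, hback⟩ := hN (x + e) (-e) (by simp [e, ← Pi.single_neg, eucNorm_single])
  rw [add_neg_cancel_right] at hback
  obtain ⟨q, hq⟩ := Nat.dvd_factorial (m := n + k) (n := 2 * N) (by lia) (by lia)
  rw [hq]
  exact (hout.trans h0 hb hη hback).mul h0 hb hη q

-- Travel to `t`, walk on until the time is a multiple of `(2 * N)!`, then loop.
lemma exists_travels_mul_factorial_near (hd : 0 < d) (h0 : ∀ x y, 0 ≤ Q x y) (hb : HasRange Q b)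
    (hb0 : 0 ≤ b) (h1 : ∀ x, HasSum (Q x) 1) (hη : 0 < η) (hηb : η * ballCard d b ≤ 1)
    (hN : ∀ x e, eucNorm e = 1 → ∃ n ≤ N, 0 < n ∧ Travels Q η n x (x + e)) {r : ℝ} {x t : Zd d}
    (hxt : dist x t ≤ r) : ∃ y, dist t y ≤ (2 * N).factorial * b ∧
      Travels Q η ((2 * N).factorial * (N * (d * ⌊r⌋₊) + 1)) x y := by
  have hloop := travels_self_factorial hd h0 hb hη hN
  obtain ⟨n, hn, hxt⟩ := exists_travels_of_dist_le h0 hb hη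
    (fun x e he => (hN x e he).imp fun n h => ⟨h.1, h.2.2⟩) hxt
  set M := (2 * N).factorial
  have hM : 0 < M := Nat.factorial_pos _
  obtain ⟨k, hk, q, hq, hnk⟩ : ∃ k ≤ M, ∃ q ≤ n + 1, n + k = M * q := by
    have hle : n ≤ M * (n / M + 1) := (Nat.lt_mul_div_succ n hM).le
    have := Nat.mul_div_le n M
    have := Nat.div_le_self n M
    exact ⟨M * (n / M + 1) - n, by rw [Nat.mul_succ]; lia, n / M + 1, by lia, by lia⟩
  obtain ⟨y, hty⟩ := exists_travels h0 hb h1 hη hηb k t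
  refine ⟨y, (hty.dist_le hb hη).trans (by gcongr), ?_⟩
  have h := (hxt.trans h0 hb hη hty).trans h0 hb hη
    ((hloop y).mul h0 hb hη (N * (d * ⌊r⌋₊) + 1 - q))
  rwa [hnk, ← mul_add, Nat.add_sub_cancel' (by lia)] at h

end Travel

section Tracking

variable {X : Type*} [PseudoMetricSpace X] {G : X → X → Prop} {K : ℝ}

/-- A walker making `G`-moves can follow a moving target within distance `K`: when the target
moves by at most `1`, a single `G`-move brings the walker back within distance `K` of it. -/
def Tracks (G : X → X → Prop) (K : ℝ) : Prop :=
  ∀ y t, dist y t ≤ K + 1 → ∃ z, dist z t ≤ K ∧ G y z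

lemma Tracks.exists_path (h : Tracks G K) (hK : 0 ≤ K) {p : ℕ → X}
    (hp : ∀ k, dist (p k) (p (k + 1)) ≤ 1) :
    ∃ y : ℕ → X, y 0 = p 0 ∧ ∀ k, dist (y k) (p k) ≤ K ∧ G (y k) (y (k + 1)) := by
  choose! next hnext using h
  let y : ℕ → X := fun k => Nat.rec (p 0) (fun k z => next z (p (k + 1))) k
  have hstep : ∀ k, dist (y k) (p k) ≤ K → dist (y k) (p (k + 1)) ≤ K + 1 := fun k hk =>
    (dist_triangle _ _ _).trans (add_le_add hk (hp k))
  have hdist : ∀ k, dist (y k) (p k) ≤ K := by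
    intro k
    induction k with
    | zero => simpa [y] using hK
    | succ k ih => exact (hnext _ _ (hstep k ih)).1
  exact ⟨y, rfl, fun k => ⟨hdist k, (hnext _ _ (hstep k (hdist k))).2⟩⟩

end Tracking

section Averaging

lemma sum_comp_le_of_card_fiber_le {ι X : Type*} [DecidableEq X] {s : Finset ι} {g : ι → X}
    {F : X → ℝ} (hF : ∀ y, 0 ≤ F y) {n : ℕ} (hn : ∀ y, #{a ∈ s | g a = y} ≤ n) :
    ∑ a ∈ s, F (g a) ≤ n * ∑ y ∈ s.image g, F y := by
  rw [sum_comp, mul_sum]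
  refine sum_le_sum fun y _ => ?_
  rw [nsmul_eq_mul]
  exact mul_le_mul_of_nonneg_right (by exact_mod_cast hn y) (hF y)

lemma sum_abs_comp_le {ι X : Type*} [DecidableEq X] {t : Finset ι} {g : ι → X} {n : ℕ}
    (hn : ∀ z, #{a ∈ t | g a = z} ≤ n) {f : X → ℝ} {s : Finset X} (hs : f.support ⊆ s) :
    ∑ a ∈ t, |f (g a)| ≤ n * ∑ x ∈ s, |f x| := by
  refine (sum_comp_le_of_card_fiber_le (fun _ => abs_nonneg _) hn).trans ?_
  refine mul_le_mul_of_nonneg_left ?_ n.cast_nonneg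
  rw [← sum_filter_ne_zero]
  refine sum_le_sum_of_subset_of_nonneg (fun z hz => hs ?_) fun _ _ _ => abs_nonneg _
  exact abs_ne_zero.1 (mem_filter.1 hz).2

lemma sq_sub_le_mul_sum_range (g : ℕ → ℝ) (r : ℕ) :
    (g 0 - g r) ^ 2 ≤ r * ∑ k ∈ range r, (g (k + 1) - g k) ^ 2 := by
  have := sq_sum_le_card_mul_sum_sq (s := range r) (f := fun k => g (k + 1) - g k)
  rwa [sum_range_sub, card_range, sub_sq_comm] at this

lemma sum_sq_sub_path_le {ι X : Type*} [DecidableEq X] {G : X → X → Prop} {f : X → ℝ} {E : ℝ}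
    (hE : ∀ T : Finset (X × X), (∀ p ∈ T, G p.1 p.2) → ∑ p ∈ T, (f p.2 - f p.1) ^ 2 ≤ E)
    {s : Finset ι} {Y : ι → ℕ → X} (hY : ∀ a k, G (Y a k) (Y a (k + 1))) {n : ℕ}
    (hn : ∀ k z, #{a ∈ s | Y a k = z} ≤ n) (r : ℕ) :
    ∑ a ∈ s, (f (Y a 0) - f (Y a r)) ^ 2 ≤ r ^ 2 * (n * E) := by
  have hstep : ∀ k, ∑ a ∈ s, (f (Y a (k + 1)) - f (Y a k)) ^ 2 ≤ n * E := fun k => by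
    refine (sum_comp_le_of_card_fiber_le (g := fun a => (Y a k, Y a (k + 1)))
      (F := fun p => (f p.2 - f p.1) ^ 2) (fun _ => sq_nonneg _) (n := n) fun p => ?_).trans ?_
    · refine (card_le_card (monotone_filter_right s fun a _ ha => ?_)).trans (hn k p.1)
      exact congrArg Prod.fst ha
    · refine mul_le_mul_of_nonneg_left (hE _ fun p hp => ?_) n.cast_nonneg
      obtain ⟨a, -, rfl⟩ := mem_image.1 hp
      exact hY a k
  calc ∑ a ∈ s, (f (Y a 0) - f (Y a r)) ^ 2
      ≤ ∑ a ∈ s, r * ∑ k ∈ range r, (f (Y a (k + 1)) - f (Y a k)) ^ 2 :=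
        sum_le_sum fun a _ => sq_sub_le_mul_sum_range (fun k => f (Y a k)) r
    _ = r * ∑ k ∈ range r, ∑ a ∈ s, (f (Y a (k + 1)) - f (Y a k)) ^ 2 := by
        rw [← mul_sum, sum_comm]
    _ ≤ r * ∑ _k ∈ range r, n * E := by gcongr with k; exact hstep k
    _ = r ^ 2 * (n * E) := by rw [sum_const, card_range, nsmul_eq_mul]; ring

-- Averages the pointwise bound `f x ^ 2 ≤ (f x - f y) ^ 2 + 2 * |f x| * |f y|` over `y = g x u`.
lemma card_mul_sum_sq_le {ι X : Type*} (t : Finset ι) (s : Finset X) (f : X → ℝ) (g : X → ι → X)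
    {A M : ℝ} (hA : ∀ u ∈ t, ∑ x ∈ s, (f x - f (g x u)) ^ 2 ≤ A)
    (hM : ∀ x, ∑ u ∈ t, |f (g x u)| ≤ M) :
    #t * ∑ x ∈ s, f x ^ 2 ≤ #t * A + 2 * (∑ x ∈ s, |f x|) * M := by
  have hpoint : ∀ a b : ℝ, a ^ 2 ≤ (a - b) ^ 2 + 2 * (|a| * |b|) := fun a b => by
    rw [← abs_mul]
    nlinarith [le_abs_self (a * b), sq_nonneg b]
  calc #t * ∑ x ∈ s, f x ^ 2 = ∑ _u ∈ t, ∑ x ∈ s, f x ^ 2 := by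
        rw [sum_const, nsmul_eq_mul]
    _ ≤ ∑ u ∈ t, ∑ x ∈ s, ((f x - f (g x u)) ^ 2 + 2 * (|f x| * |f (g x u)|)) :=
        sum_le_sum fun u _ => sum_le_sum fun x _ => hpoint _ _
    _ = ∑ u ∈ t, ∑ x ∈ s, (f x - f (g x u)) ^ 2 + 2 * ∑ x ∈ s, |f x| * ∑ u ∈ t, |f (g x u)| := by
        simp only [sum_add_distrib, mul_sum]
        rw [sum_comm (s := t) (t := s) (f := fun u x => 2 * (|f x| * |f (g x u)|))]
    _ ≤ ∑ _u ∈ t, A + 2 * ∑ x ∈ s, |f x| * M := by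
        gcongr with u hu x
        · exact hA u hu
        · exact hM x
    _ = #t * A + 2 * (∑ x ∈ s, |f x|) * M := by
        rw [sum_const, nsmul_eq_mul, ← sum_mul, mul_assoc]

end Averaging

section CubePaths

variable {d r : ℕ}

/-- The path from `x` to `x + u` along which each coordinate increases by `1` at every step until
it reaches its final value. -/
def cubePath (x : Zd d) (u : Fin d → Fin r) (k : ℕ) : Zd d := fun i => x i + min (u i : ℕ) k

lemma cubePath_zero (x : Zd d) (u : Fin d → Fin r) : cubePath x u 0 = x := by
  ext i
  simp [cubePath]

lemma dist_cubePath_succ_le (x : Zd d) (u : Fin d → Fin r) (k : ℕ) :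
    dist (cubePath x u k) (cubePath x u (k + 1)) ≤ 1 := by
  refine (dist_pi_le_iff zero_le_one).2 fun i => ?_
  rw [dist_eq_norm, Int.norm_eq_abs]
  have : |cubePath x u k i - cubePath x u (k + 1) i| ≤ 1 := by
    simp only [cubePath, abs_le]
    lia
  exact_mod_cast this

lemma cubePath_left_injective (u : Fin d → Fin r) (k : ℕ) :
    Function.Injective fun x : Zd d => cubePath x u k :=
  add_left_injective fun i => ((min (u i : ℕ) k : ℕ) : ℤ)

lemma cubePath_endpoint_injective (x : Zd d) :
    Function.Injective fun u : Fin d → Fin r => cubePath x u r := by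
  intro u v huv
  ext i
  have := congrFun huv i
  simp only [cubePath, min_eq_left (u i).is_lt.le, min_eq_left (v i).is_lt.le] at this
  lia

end CubePaths

section Poincare

variable {d : ℕ} {G : Zd d → Zd d → Prop} {K : ℝ}

lemma card_filter_eq_le_ballCard {ι : Type*} (s : Finset ι) {g h : ι → Zd d} (hh : h.Injective)
    (hgh : ∀ a, dist (g a) (h a) ≤ K) (z : Zd d) : #{a ∈ s | g a = z} ≤ ballCard d K := by
  refine card_le_ballCard hh (z := z) fun a ha => ?_
  rw [← (mem_filter.1 ha).2, dist_comm]
  exact hgh a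

lemma Tracks.sum_sq_le (hG : Tracks G K) (hK : 0 ≤ K) {f : Zd d → ℝ} {s : Finset (Zd d)}
    (hs : f.support ⊆ s) {E : ℝ}
    (hE : ∀ T : Finset (Zd d × Zd d), (∀ p ∈ T, G p.1 p.2) →
      ∑ p ∈ T, (f p.2 - f p.1) ^ 2 ≤ E) {r : ℕ} (hr : 0 < r) :
    ∑ x ∈ s, f x ^ 2 ≤ ballCard d K * (r ^ 2 * E + 2 * (∑ x ∈ s, |f x|) ^ 2 / r ^ d) := by
  choose Y hY0 hY using fun (x : Zd d) (u : Fin d → Fin r) =>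
    hG.exists_path hK (dist_cubePath_succ_le x u)
  simp only [cubePath_zero] at hY0
  have henergy : ∀ u ∈ univ,
      ∑ x ∈ s, (f x - f (Y x u r)) ^ 2 ≤ r ^ 2 * (ballCard d K * E) := fun u _ => by
    simpa only [hY0] using sum_sq_sub_path_le hE (s := s) (Y := fun x => Y x u)
      (fun x k => (hY x u k).2) (fun k => card_filter_eq_le_ballCard s
        (cubePath_left_injective u k) fun x => (hY x u k).1) r
  have hmass : ∀ x, ∑ u, |f (Y x u r)| ≤ ballCard d K * ∑ x ∈ s, |f x| := fun x =>
    sum_abs_comp_le (card_filter_eq_le_ballCard univ (cubePath_endpoint_injective x)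
      fun u => (hY x u r).1) hs
  have haverage := card_mul_sum_sq_le univ s f (fun x u => Y x u r) henergy hmass
  rw [card_univ, Fintype.card_fun, Fintype.card_fin, Fintype.card_fin, Nat.cast_pow] at haverage
  have hrd : (0 : ℝ) < r ^ d := by positivity
  refine le_of_mul_le_mul_left (haverage.trans_eq ?_) hrd
  field_simp

end Poincare

section Norms

variable {d : ℕ} {R : Zd d → Zd d → ℝ} {π f : Zd d → ℝ} {s : Finset (Zd d)} {b c C : ℝ}

lemma l2norm_nonneg (π f : Zd d → ℝ) : 0 ≤ l2norm π f := Real.sqrt_nonneg _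

lemma l2norm_sq_le (hπ0 : ∀ x, 0 ≤ π x) (hπC : ∀ x, π x ≤ C) (hs : f.support ⊆ s) :
    l2norm π f ^ 2 ≤ C * ∑ x ∈ s, f x ^ 2 := by
  have hsum : ∑' x, f x ^ 2 * π x = ∑ x ∈ s, f x ^ 2 * π x :=
    tsum_eq_sum fun x hx => by simp [Function.notMem_support.1 fun h => hx (hs h)]
  rw [l2norm, Real.sq_sqrt (tsum_nonneg fun x => mul_nonneg (sq_nonneg _) (hπ0 x)), hsum, mul_sum]
  refine sum_le_sum fun x _ => ?_
  rw [mul_comm]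
  exact mul_le_mul_of_nonneg_right (hπC x) (sq_nonneg _)

lemma mul_sum_abs_le_l1norm (hcπ : ∀ x, c ≤ π x) (hs : f.support ⊆ s) :
    c * ∑ x ∈ s, |f x| ≤ l1norm π f := by
  have hsum : ∑' x, |f x| * π x = ∑ x ∈ s, |f x| * π x :=
    tsum_eq_sum fun x hx => by simp [Function.notMem_support.1 fun h => hx (hs h)]
  rw [l1norm, hsum, mul_sum]
  refine sum_le_sum fun x _ => ?_
  rw [mul_comm]
  exact mul_le_mul_of_nonneg_left (hcπ x) (abs_nonneg _)

lemma dirichlet_nonneg (hR : ∀ x y, 0 ≤ R x y) (hπ : ∀ x, 0 ≤ π x) : 0 ≤ dirichlet π R f :=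
  mul_nonneg (by norm_num)
    (tsum_nonneg fun p => mul_nonneg (mul_nonneg (sq_nonneg _) (hπ p.1)) (hR p.1 p.2))

lemma HasRange.summable_dirichlet (hb : HasRange R b) (hf : f.support.Finite) :
    Summable fun p : Zd d × Zd d => (f p.2 - f p.1) ^ 2 * π p.1 * R p.1 p.2 := by
  set S := ⋃ x ∈ f.support, closedBall x b
  have hS : S.Finite := hf.biUnion fun x _ => finite_closedBall x b
  refine summable_of_hasFiniteSupport (((hf.prod hS).union (hS.prod hf)).subset fun p hp => ?_)
  have hdist : dist p.1 p.2 ≤ b := hb (right_ne_zero_of_mul hp)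
  have hor : f p.1 ≠ 0 ∨ f p.2 ≠ 0 := by
    by_contra! hz
    exact hp (by simp [hz])
  rcases hor with h | h
  · exact .inl ⟨h, Set.mem_biUnion h (mem_closedBall'.2 hdist)⟩
  · exact .inr ⟨Set.mem_biUnion h (mem_closedBall.2 hdist), h⟩

lemma sum_sq_sub_le_dirichlet (hR : ∀ x y, 0 ≤ R x y) (hb : HasRange R b) (hc : 0 < c)
    (hcπ : ∀ x, c ≤ π x) (hf : f.support.Finite) {δ : ℝ} (hδ : 0 < δ) {T : Finset (Zd d × Zd d)}
    (hT : ∀ p ∈ T, δ ≤ R p.1 p.2) :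
    ∑ p ∈ T, (f p.2 - f p.1) ^ 2 ≤ 2 / (c * δ) * dirichlet π R f := by
  have hπ : ∀ x, 0 ≤ π x := fun x => hc.le.trans (hcπ x)
  rw [div_mul_eq_mul_div, le_div_iff₀ (by positivity), sum_mul]
  calc ∑ p ∈ T, (f p.2 - f p.1) ^ 2 * (c * δ)
      ≤ ∑ p ∈ T, (f p.2 - f p.1) ^ 2 * π p.1 * R p.1 p.2 := sum_le_sum fun p hp => by
        rw [mul_assoc]
        exact mul_le_mul_of_nonneg_left (mul_le_mul (hcπ _) (hT p hp) hδ.le (hπ _)) (sq_nonneg _)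
    _ ≤ ∑' p : Zd d × Zd d, (f p.2 - f p.1) ^ 2 * π p.1 * R p.1 p.2 :=
        (hb.summable_dirichlet hf).sum_le_tsum T fun p _ =>
          mul_nonneg (mul_nonneg (sq_nonneg _) (hπ p.1)) (hR p.1 p.2)
    _ = 2 * dirichlet π R f := by rw [dirichlet]; ring

end Norms

section Nash

variable {d : ℕ}

/-- The kernel `R` satisfies the `d`-dimensional Nash inequality with constant `κ` with respect
to `π`. -/
def NashInequality (π : Zd d → ℝ) (R : Zd d → Zd d → ℝ) (κ : ℝ) : Prop :=
  ∀ f : Zd d → ℝ, f.support.Finite →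
    κ * l2norm π f ^ ((2 : ℝ) + 4 / (d : ℝ)) * l1norm π f ^ (-(4 : ℝ) / (d : ℝ))
      ≤ dirichlet π R f

lemma exists_nat_scale (hd : 0 < d) {v : ℝ} (hv : 1 ≤ v) :
    ∃ r : ℕ, 0 < r ∧ v ≤ (r : ℝ) ^ d ∧ (r : ℝ) ^ 2 ≤ 4 * v ^ ((2 : ℝ) / d) := by
  have hv0 : 0 ≤ v := zero_le_one.trans hv
  set ρ : ℝ := v ^ ((1 : ℝ) / d)
  have hρ : 1 ≤ ρ := Real.one_le_rpow hv (by positivity)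
  have hρd : ρ ^ d = v := by
    rw [← Real.rpow_mul_natCast hv0, one_div_mul_cancel (by positivity), Real.rpow_one]
  have hρ2 : ρ ^ 2 = v ^ ((2 : ℝ) / d) := by
    rw [← Real.rpow_mul_natCast hv0, one_div_mul_eq_div, Nat.cast_ofNat]
  have hceil : (⌈ρ⌉₊ : ℝ) ≤ 2 * ρ := by
    linarith [Nat.ceil_lt_add_one (zero_le_one.trans hρ)]
  refine ⟨⌈ρ⌉₊, Nat.ceil_pos.2 (by linarith), ?_, ?_⟩
  · rw [← hρd]
    gcongr
    exact Nat.le_ceil ρ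
  · calc (⌈ρ⌉₊ : ℝ) ^ 2 ≤ (2 * ρ) ^ 2 := by gcongr
      _ = 4 * v ^ ((2 : ℝ) / d) := by rw [mul_pow, hρ2]; norm_num

-- The optimal scale `r ^ d ≈ 2 * D * β ^ 2 / L ^ 2` makes the last term of `h` at most `L ^ 2 / 2`.
lemma nash_of_forall_scale (hd : 0 < d) {A D E L β : ℝ} (hA : 0 < A) (hD : 0 < D) (hE : 0 ≤ E)
    (hL : 0 < L) (hβ : 0 < β) (hlow : L ^ 2 ≤ 2 * D * β ^ 2)
    (h : ∀ r : ℕ, 0 < r → L ^ 2 ≤ A * (r : ℝ) ^ 2 * E + D * β ^ 2 / (r : ℝ) ^ d) :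
    (8 * A * (2 * D) ^ ((2 : ℝ) / d))⁻¹ * L ^ ((2 : ℝ) + 4 / d) * β ^ (-(4 : ℝ) / d) ≤ E := by
  set v : ℝ := 2 * D * β ^ 2 / L ^ 2 with hv
  obtain ⟨r, hr, hvr, hrv⟩ := exists_nat_scale hd ((one_le_div (by positivity)).2 hlow : 1 ≤ v)
  have hmass : D * β ^ 2 / (r : ℝ) ^ d ≤ L ^ 2 / 2 :=
    calc D * β ^ 2 / (r : ℝ) ^ d ≤ D * β ^ 2 / v := by gcongr
      _ = L ^ 2 / 2 := by rw [hv]; field_simp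
  have henergy : A * (r : ℝ) ^ 2 * E ≤ A * (4 * v ^ ((2 : ℝ) / d)) * E := by gcongr
  have hmain : L ^ 2 ≤ 8 * A * v ^ ((2 : ℝ) / d) * E := by linarith [h r hr]
  have hsq : ∀ t : ℝ, 0 < t → (t ^ 2) ^ ((2 : ℝ) / d) = t ^ ((4 : ℝ) / d) := fun t ht => by
    rw [← Real.rpow_natCast_mul ht.le]
    congr 1
    push_cast
    ring
  have hvpow : v ^ ((2 : ℝ) / d)
      = (2 * D) ^ ((2 : ℝ) / d) * β ^ ((4 : ℝ) / d) / L ^ ((4 : ℝ) / d) := by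
    rw [hv, Real.div_rpow (by positivity) (by positivity),
      Real.mul_rpow (by positivity) (by positivity), hsq β hβ, hsq L hL]
  rw [hvpow] at hmain
  rw [neg_div, Real.rpow_neg hβ.le, Real.rpow_add hL, Real.rpow_ofNat]
  calc (8 * A * (2 * D) ^ ((2 : ℝ) / d))⁻¹ * (L ^ 2 * L ^ ((4 : ℝ) / d)) * (β ^ ((4 : ℝ) / d))⁻¹
      ≤ (8 * A * (2 * D) ^ ((2 : ℝ) / d))⁻¹ * (8 * A * ((2 * D) ^ ((2 : ℝ) / d)
          * β ^ ((4 : ℝ) / d) / L ^ ((4 : ℝ) / d)) * E * L ^ ((4 : ℝ) / d))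
          * (β ^ ((4 : ℝ) / d))⁻¹ := by gcongr
    _ = E := by field_simp

variable {R : Zd d → Zd d → ℝ} {π f : Zd d → ℝ} {b c C δ K : ℝ}

lemma l2norm_sq_le_l1norm_sq (hc : 0 < c) (hcπ : ∀ x, c ≤ π x) (hπC : ∀ x, π x ≤ C)
    (hf : f.support.Finite) : l2norm π f ^ 2 ≤ C / c ^ 2 * l1norm π f ^ 2 := by
  have hC : 0 ≤ C := hc.le.trans ((hcπ 0).trans (hπC 0))
  have hs : f.support ⊆ hf.toFinset := by simp
  calc l2norm π f ^ 2 ≤ C * ∑ x ∈ hf.toFinset, f x ^ 2 :=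
        l2norm_sq_le (fun x => hc.le.trans (hcπ x)) hπC hs
    _ ≤ C * (∑ x ∈ hf.toFinset, |f x|) ^ 2 := by
        gcongr
        simpa only [sq_abs] using sum_sq_le_sq_sum_of_nonneg
          (s := hf.toFinset) (f := fun x => |f x|) fun x _ => abs_nonneg (f x)
    _ = C / c ^ 2 * (c * ∑ x ∈ hf.toFinset, |f x|) ^ 2 := by field_simp
    _ ≤ C / c ^ 2 * l1norm π f ^ 2 := by
        gcongr
        exact mul_sum_abs_le_l1norm hcπ hs

lemma Tracks.l2norm_sq_le_dirichlet_add (h : Tracks (fun x y => δ ≤ R x y) K) (hK : 0 ≤ K)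
    (hδ : 0 < δ) (hR : ∀ x y, 0 ≤ R x y) (hb : HasRange R b) (hc : 0 < c)
    (hcπ : ∀ x, c ≤ π x) (hπC : ∀ x, π x ≤ C) (hf : f.support.Finite) {r : ℕ} (hr : 0 < r) :
    l2norm π f ^ 2 ≤ 2 * C * ballCard d K / (c * δ) * r ^ 2 * dirichlet π R f
      + 2 * C * ballCard d K / c ^ 2 * l1norm π f ^ 2 / r ^ d := by
  have hC : 0 ≤ C := hc.le.trans ((hcπ 0).trans (hπC 0))
  have hs : f.support ⊆ hf.toFinset := by simp
  set S := ∑ x ∈ hf.toFinset, |f x|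
  calc l2norm π f ^ 2 ≤ C * ∑ x ∈ hf.toFinset, f x ^ 2 :=
        l2norm_sq_le (fun x => hc.le.trans (hcπ x)) hπC hs
    _ ≤ C * (ballCard d K * (r ^ 2 * (2 / (c * δ) * dirichlet π R f) + 2 * S ^ 2 / r ^ d)) := by
        gcongr
        exact h.sum_sq_le hK hs (fun T hT => sum_sq_sub_le_dirichlet hR hb hc hcπ hf hδ hT) hr
    _ = 2 * C * ballCard d K / (c * δ) * r ^ 2 * dirichlet π R f
          + 2 * C * ballCard d K / c ^ 2 * (c * S) ^ 2 / r ^ d := by field_simp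
    _ ≤ _ := by
        gcongr
        exact mul_sum_abs_le_l1norm hcπ hs

lemma exists_nashInequality_of_tracks (hd : 0 < d) (hc : 0 < c) (hcC : c ≤ C) (hδ : 0 < δ)
    (hK : 0 ≤ K) : ∃ κ : ℝ, 0 < κ ∧ ∀ (R : Zd d → Zd d → ℝ) (π : Zd d → ℝ) (b : ℝ),
      (∀ x y, 0 ≤ R x y) → HasRange R b → (∀ x, c ≤ π x) → (∀ x, π x ≤ C) →
      Tracks (fun x y => δ ≤ R x y) K → NashInequality π R κ := by
  have hC : 0 < C := hc.trans_le hcC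
  have hW : (1 : ℝ) ≤ ballCard d K := by exact_mod_cast ballCard_pos hK
  set A : ℝ := 2 * C * ballCard d K / (c * δ)
  set D : ℝ := 2 * C * ballCard d K / c ^ 2
  have hA : 0 < A := by positivity
  have hD : 0 < D := by positivity
  have hCD : C / c ^ 2 ≤ 2 * D := by
    rw [mul_div_assoc']
    gcongr
    nlinarith
  refine ⟨(8 * A * (2 * D) ^ ((2 : ℝ) / d))⁻¹, by positivity, ?_⟩
  intro R π b hR hb hcπ hπC htrack f hf
  have hE : 0 ≤ dirichlet π R f := dirichlet_nonneg hR fun x => hc.le.trans (hcπ x)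
  have hlow : l2norm π f ^ 2 ≤ 2 * D * l1norm π f ^ 2 :=
    (l2norm_sq_le_l1norm_sq hc hcπ hπC hf).trans (by gcongr)
  rcases (l2norm_nonneg π f).eq_or_lt with hL | hL
  · rwa [← hL, Real.zero_rpow (by positivity), mul_zero, zero_mul]
  · have hβ : 0 ≤ l1norm π f :=
      tsum_nonneg fun x => mul_nonneg (abs_nonneg _) (hc.le.trans (hcπ x))
    have hβ' : l1norm π f ≠ 0 := fun h0 => by
      rw [h0] at hlow
      nlinarith [pow_pos hL 2]
    exact nash_of_forall_scale hd hA hD hE hL (hβ.lt_of_ne' hβ') hlow fun r hr =>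
      htrack.l2norm_sq_le_dirichlet_add hK hδ hR hb hc hcπ hπC hf hr

end Nash

lemma exists_tracks_compK_adjK_kerpow (d : ℕ) (hd : 0 < d) (ε B : ℝ) (N : ℕ) (hε : 0 < ε)
    (hB : 0 ≤ B) : ∃ m : ℕ, 1 ≤ m ∧ ∃ K : ℝ, 0 ≤ K ∧ ∃ δ : ℝ, 0 < δ ∧
      ∀ (Q : Zd d → Zd d → ℝ) (π : Zd d → ℝ), (∀ x y, 0 ≤ Q x y) → (∀ x, HasSum (Q x) 1) →
        (∀ x, 0 < π x) → StronglyIrreducible Q ε N → HasRange Q B →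
        Tracks (fun x y => δ ≤ compK (adjK π (kerpow Q m)) (kerpow Q m) x y) K := by
  set M := (2 * N).factorial
  set K : ℝ := M * B
  set L : ℕ := N * (d * ⌊K + 1⌋₊) + 1
  have hV : (0 : ℝ) < ballCard d B := by exact_mod_cast ballCard_pos hB
  obtain ⟨η, hη, hηle⟩ : ∃ η : ℝ, 0 < η ∧ η ≤ min (min ε 1) (ballCard d B : ℝ)⁻¹ :=
    ⟨_, by positivity, le_rfl⟩
  obtain ⟨⟨hηε, hη1⟩, hηV⟩ := (le_min_iff.1 hηle).imp_left le_min_iff.1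
  refine ⟨M * L, Nat.mul_pos (Nat.factorial_pos _) (Nat.succ_pos _), K, by positivity,
    η ^ (M * L) * η ^ (M * L), by positivity, ?_⟩
  intro Q π h0 h1 hπ hirr hb x t hxt
  have hN := hirr.exists_travels hε hη hη1 hηε
  have hstay : Travels Q η (M * L) x x := (travels_self_factorial hd h0 hb hη hN x).mul h0 hb hη L
  obtain ⟨y, hty, hmove⟩ := exists_travels_mul_factorial_near hd h0 hb hB h1 hη
    ((le_mul_inv_iff₀ hV).1 (by rwa [one_mul])) hN hxt
  refine ⟨y, by rwa [dist_comm], ?_⟩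
  calc η ^ (M * L) * η ^ (M * L) ≤ kerpow Q (M * L) x x * kerpow Q (M * L) x y :=
        mul_le_mul hstay hmove (by positivity) (kerpow_nonneg h0 _ x x)
    _ ≤ _ := mul_le_compK_adjK hπ (kerpow_nonneg h0 _) (hb.pow _) x y

theorem nash_inequality_for_power_general
    (d : ℕ) (hd : 0 < d) (c C ε B : ℝ) (N : ℕ)
    (hc : 0 < c) (hcC : c ≤ C) (hε : 0 < ε) (hB : 0 ≤ B) :
    ∃ m : ℕ, 1 ≤ m ∧ ∃ κ : ℝ, 0 < κ ∧
      ∀ (Q : Zd d → Zd d → ℝ) (π : Zd d → ℝ), (∀ x y, 0 ≤ Q x y) → (∀ x, HasSum (Q x) 1) →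
        (∀ x, c ≤ π x ∧ π x ≤ C) → StronglyIrreducible Q ε N → HasRange Q B →
        NashInequality π (compK (adjK π (kerpow Q m)) (kerpow Q m)) κ := by
  obtain ⟨m, hm, K, hK, δ, hδ, htrack⟩ := exists_tracks_compK_adjK_kerpow d hd ε B N hε hB
  obtain ⟨κ, hκ, hnash⟩ := exists_nashInequality_of_tracks hd hc hcC hδ hK
  refine ⟨m, hm, κ, hκ, fun Q π h0 h1 hcπ hirr hb => ?_⟩
  have hπ : ∀ x, 0 < π x := fun x => hc.trans_le (hcπ x).1
  have hm0 := kerpow_nonneg h0 m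
  have hmb := hb.pow m
  exact hnash _ π _ (compK_nonneg (adjK_nonneg (fun x => (hπ x).le) hm0) hm0)
    (hmb.adjoint.comp hmb) (fun x => (hcπ x).1) (fun x => (hcπ x).2) (htrack Q π h0 h1 hπ hirr hb)

theorem nash_inequality_for_power
    (d : ℕ) (hd : 0 < d) (c C ε B : ℝ) (N : ℕ)
    (hc : 0 < c) (hcC : c ≤ C) (hε : 0 < ε) (hB : 0 < B) :
    ∃ m : ℕ, 1 ≤ m ∧ ∃ κ : ℝ, 0 < κ ∧
      ∀ (Q : Zd d → Zd d → ℝ) (π : Zd d → ℝ),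
        (∀ x y, 0 ≤ Q x y) →
        (∀ x, HasSum (fun y => Q x y) 1) →
        (∀ x, 0 < π x) →
        (∀ y, HasSum (fun x => π x * Q x y) (π y)) →
        (∀ x, c ≤ π x ∧ π x ≤ C) →
        (∀ (x e : Zd d), eucNorm e = 1 → ∃ nn ≤ N, ε ≤ kerpow Q nn x (x + e)) →
        (∀ x y : Zd d, B < eucNorm (y - x) → Q x y = 0) →
        ∀ f : Zd d → ℝ, (Function.support f).Finite →
          κ * l2norm π f ^ ((2 : ℝ) + 4 / (d : ℝ)) * l1norm π f ^ (-(4 : ℝ) / (d : ℝ))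
            ≤ dirichlet π (compK (adjK π (kerpow Q m)) (kerpow Q m)) f := by
  obtain ⟨m, hm, κ, hκ, h⟩ := nash_inequality_for_power_general d hd c C ε B N hc hcC hε hB.le
  exact ⟨m, hm, κ, hκ, fun Q π h0 h1 _ _ hcπ hirr hb =>
    h Q π h0 h1 hcπ hirr (hasRange_of_eucNorm hb)⟩

end
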